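/- (Kalai) For every polytope P of dimension d and every integer k with 0 ≤ k ≤ d/2 − 1: (k+1)·g_{k+1}(P) + (d−k+1)·g_k(P) = Σ_{i=0}^{k} (i+1) · Σ_{F} g_i(F)·g_{k−i}(P/F), where the inner sum runs over all faces F of P with dim F = 2i. -/

import Mathlib

open Classical Polynomial

section PolytopeDefs

variable {V : Type*} [AddCommGroup V] [Module ℝ V]

/-- A polytope: the convex hull of finitely many points. -/
def IsPolytope (P : Set V) : Prop := ∃ S : Finset V, P = convexHull ℝ (S : Set V)

/-- Faces of a polytope (or of a cone): the set itself, the empty face, and the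
sets of maximizers of linear functionals (equivalently, intersections with
supporting hyperplanes). -/
def IsFace (P F : Set V) : Prop :=
  F = P ∨ F = ∅ ∨ ∃ l : V →ₗ[ℝ] ℝ, F = {x | x ∈ P ∧ ∀ y ∈ P, l y ≤ l x}

/-- Dimension of a polytope: the dimension of its affine span, with the
convention `pdim ∅ = -1`. -/
noncomputable def pdim (P : Set V) : ℤ :=
  if P = ∅ then -1 else (Module.finrank ℝ (affineSpan ℝ P).direction : ℤ)

/-- The `g`-truncation: from the toric `h`-polynomial of a `d`-dimensional
polytope to its toric `g`-polynomial, via `g_k = h_k - h_{k-1}` for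
`0 ≤ k ≤ d/2`, with `h_{-1} = 0`. -/
noncomputable def truncG (d : ℤ) (h : Polynomial ℚ) : Polynomial ℚ :=
  ∑ k ∈ Finset.range (d.toNat / 2 + 1),
    Polynomial.C (h.coeff k - if k = 0 then 0 else h.coeff (k - 1)) * Polynomial.X ^ k

/-- Fuelled recursion computing the toric `h`-polynomial of the interval `[F,G]`
of a face lattice (with `F` playing the role of the empty face):
`h([F,G],t) = ∑_{F ≤ G' < G} g([F,G'],t) · (t-1)^{dim G - dim G' - 1}`. -/
noncomputable def relHAux : ℕ → Set V → Set V → Polynomial ℚ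
  | 0, _, _ => 1
  | n + 1, F, G =>
      if G = F then 1
      else ∑ᶠ G' ∈ {G' : Set V | IsFace G G' ∧ F ⊆ G' ∧ G' ≠ G},
        truncG (pdim G' - pdim F - 1) (relHAux n F G') *
          (Polynomial.X - 1) ^ (pdim G - pdim G' - 1).toNat

/-- The toric `h`-polynomial of the interval `[F,G]` in a face lattice. -/
noncomputable def relH (F G : Set V) : Polynomial ℚ := relHAux (pdim G + 1).toNat F G

/-- The toric `g`-polynomial of the interval `[F,G]` in a face lattice;
`relG F P` is the polynomial `g(P/F, t)`. -/
noncomputable def relG (F G : Set V) : Polynomial ℚ :=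
  truncG (pdim G - pdim F - 1) (relH F G)

/-- The toric `h`-polynomial `h(P,t)` of a polytope `P`. -/
noncomputable def toricH (P : Set V) : Polynomial ℚ := relH ∅ P

/-- The toric `g`-polynomial `g(P,t)` of a polytope `P`. -/
noncomputable def toricG (P : Set V) : Polynomial ℚ := relG ∅ P

end PolytopeDefs

/-!
Work in the incidence algebra of the face lattice, with entries in `ℚ[t]`, and let `κ` be the
kernel `(t - 1) ^ rank`. Write `f ↦ f^rev` for `p(t) ↦ t ^ rank · p(1/t)` applied to every entry.
The Euler relation says `κ · κ^rev = 1`, and with it the recursion for the toric polynomials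
becomes `g^rev = g · κ`.

Regard an entry over an interval of rank `n` as a form of degree `n` in `s, t`. Then
`D = ∂/∂s + ∂/∂t` is a derivation which kills `κ` and satisfies `(D f)^rev = t · D (f^rev)`.
Applied to `g^rev = g · κ` this gives `(D g)^rev = t · (D g) · κ`. If `M` is the part of `D g` of
degree `m` over the intervals of rank `2m + 1`, then `M^rev = t · M`, so `M · g` solves the same
equation. Solutions of degree less than half of the rank are determined by their parts in these
middle degrees, whence `D g = M · g`. Comparing coefficients gives the identity.

The Euler relation over an interval `[F, P]` is a signed count of the affine functionals that are
nonnegative on the vertices of `P` and zero on those of `F`, up to their sign vectors. Removing one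
vertex at a time compares it with a count for functionals that are negative at that vertex.
-/

section Polynomial

variable {R : Type*}

theorem reflect_finset_sum [Semiring R] {ι : Type*} (s : Finset ι) (n : ℕ) (f : ι → R[X]) :
    reflect n (∑ i ∈ s, f i) = ∑ i ∈ s, reflect n (f i) := by
  ext k
  simp only [coeff_reflect, finsetSum_coeff]

variable [CommRing R]

theorem natDegree_X_sub_one_pow_le (n : ℕ) : ((X - 1 : R[X]) ^ n).natDegree ≤ n := by
  simpa using natDegree_pow_le_of_le n (natDegree_X_sub_C_le (1 : R))

theorem reflect_X_sub_one_pow (n : ℕ) : reflect n ((X - 1 : R[X]) ^ n) = (1 - X) ^ n := by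
  induction n with
  | zero => simp [reflect_one]
  | succ n ih =>
    have reflect_linear : reflect 1 (X - 1 : R[X]) = 1 - X := by
      rw [reflect_sub, reflect_one_X, reflect_one, pow_one]
    rw [pow_succ, pow_succ, reflect_mul _ _ (natDegree_X_sub_one_pow_le n)
      (by simpa using natDegree_X_sub_one_pow_le (R := R) 1), ih, reflect_linear]

theorem eq_zero_of_reflect_eq_neg [IsAddTorsionFree R] {n : ℕ} {p : R[X]}
    (hp : reflect n p = -p) (hlow : ∀ k, 2 * k < n → p.coeff k = 0) : p = 0 := by
  ext k
  have hk : p.coeff (revAt n k) = -p.coeff k := by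
    rw [← coeff_reflect, hp, coeff_neg]
  by_cases hlt : 2 * k < n
  · exact hlow k hlt
  by_cases hself : revAt n k = k
  · rw [hself] at hk
    exact self_eq_neg.mp hk
  · have hkn : k ≤ n := not_lt.mp fun h ↦ hself (revAt_eq_self_of_lt h)
    rw [revAt_le hkn] at hk hself
    rw [coeff_zero, ← neg_eq_zero, ← hk, hlow _ (by omega)]

theorem eq_zero_of_reflect_eq_X_mul {n : ℕ} {p : R[X]} (hp : reflect n p = X * p)
    (hhigh : ∀ k, n ≤ 2 * k + 1 → p.coeff k = 0) : p = 0 := by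
  ext k
  by_cases hk : n ≤ 2 * k + 1
  · exact hhigh k hk
  · rw [← coeff_X_mul, ← hp, coeff_reflect, revAt_le (by omega), hhigh _ (by omega), coeff_zero]

/-- The operator `∂/∂s + ∂/∂t` on forms of degree `n` in `s, t`, written in terms of the
dehomogenization `p` of the form `sⁿ p(t / s)`. It kills `(t - s)ⁿ`, and it commutes with
exchanging `s` and `t`, that is, with reflection. -/
noncomputable def homogDerivative (n : ℕ) (p : R[X]) : R[X] :=
  (1 - X) * derivative p + (n : R[X]) * p

theorem coeff_homogDerivative (n : ℕ) (p : R[X]) (k : ℕ) :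
    (homogDerivative n p).coeff k =
      ((k : R) + 1) * p.coeff (k + 1) + ((n : R) - k) * p.coeff k := by
  rw [homogDerivative, coeff_add, sub_mul, coeff_sub, one_mul, coeff_natCast_mul, coeff_derivative]
  cases k with
  | zero => simp
  | succ k => rw [coeff_X_mul, coeff_derivative]; push_cast; ring

theorem homogDerivative_mul (m n : ℕ) (p q : R[X]) :
    homogDerivative (m + n) (p * q) = homogDerivative m p * q + p * homogDerivative n q := by
  simp only [homogDerivative, derivative_mul, Nat.cast_add]
  ring

theorem homogDerivative_X_sub_one_pow (n : ℕ) : homogDerivative n ((X - 1 : R[X]) ^ n) = 0 := by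
  induction n with
  | zero => simp [homogDerivative]
  | succ n ih =>
    have linear_case : homogDerivative 1 (X - 1 : R[X]) = 0 := by simp [homogDerivative]
    rw [pow_succ, homogDerivative_mul, ih, linear_case, zero_mul, mul_zero, add_zero]

theorem reflect_homogDerivative {n : ℕ} {p : R[X]} (hp : p.natDegree ≤ n) :
    reflect n (homogDerivative n p) = X * homogDerivative n (reflect n p) := by
  have coeff_high : ∀ k, n < k → p.coeff k = 0 := natDegree_le_iff_coeff_eq_zero.mp hp
  ext k
  rw [coeff_reflect, coeff_homogDerivative]
  rcases k with _ | k
  · simp [coeff_high]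
  rw [coeff_X_mul, coeff_homogDerivative, coeff_reflect, coeff_reflect]
  rcases lt_trichotomy k n with hk | rfl | hk
  · rw [revAt_le hk, revAt_le hk.le, show n - (k + 1) + 1 = n - k by omega, Nat.cast_sub hk]
    push_cast
    ring
  · simp [revAt_eq_self_of_lt, coeff_high]
  · rw [revAt_eq_self_of_lt hk, revAt_eq_self_of_lt (by omega), coeff_high k hk,
      coeff_high (k + 1) (by omega), coeff_high (k + 1 + 1) (by omega)]
    ring

end Polynomial

section IncidenceAlgebra

variable {α R : Type*} [PartialOrder α]

section Rank

variable [CommRing R] (ρ : α → ℕ)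

/-- Entrywise reflection `p(t) ↦ t^(ρ y - ρ x) p(1/t)`: the involution of
Kazhdan–Lusztig–Stanley theory, for a poset with rank function `ρ`. -/
noncomputable def rankReflect (f : IncidenceAlgebra R[X] α) : IncidenceAlgebra R[X] α where
  toFun x y := reflect (ρ y - ρ x) (f x y)
  eq_zero_of_not_le' x y hxy := by
    rw [IncidenceAlgebra.apply_eq_zero_of_not_le hxy, reflect_zero]

/-- Entrywise application of `homogDerivative`, each entry being regarded as a form whose degree
is the rank of the interval. -/
noncomputable def rankDerivative (f : IncidenceAlgebra R[X] α) : IncidenceAlgebra R[X] α where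
  toFun x y := homogDerivative (ρ y - ρ x) (f x y)
  eq_zero_of_not_le' x y hxy := by
    rw [IncidenceAlgebra.apply_eq_zero_of_not_le hxy, homogDerivative, derivative_zero, mul_zero,
      mul_zero, add_zero]

/-- The part of each entry in degree `m`, for the intervals of odd rank `2 * m + 1`. This is the
only part that `rankReflect` multiplies by `X`. -/
noncomputable def middleTerm (f : IncidenceAlgebra R[X] α) : IncidenceAlgebra R[X] α where
  toFun x y := if Odd (ρ y - ρ x) then
    monomial ((ρ y - ρ x) / 2) ((f x y).coeff ((ρ y - ρ x) / 2)) else 0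
  eq_zero_of_not_le' x y hxy := by
    rw [IncidenceAlgebra.apply_eq_zero_of_not_le hxy, coeff_zero, monomial_zero_right, ite_self]

/-- The kernel `(t - 1)^(ρ y - ρ x)` through which the toric polynomials of an Eulerian poset are
defined. -/
noncomputable def eulerianKernel : IncidenceAlgebra R[X] α where
  toFun x y := if x ≤ y then (X - 1) ^ (ρ y - ρ x) else 0
  eq_zero_of_not_le' _ _ hxy := if_neg hxy

/-- Every entry has degree at most the rank of its interval. -/
def IsRankBounded (f : IncidenceAlgebra R[X] α) : Prop :=
  ∀ x y, (f x y).natDegree ≤ ρ y - ρ x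

variable {ρ} {f g : IncidenceAlgebra R[X] α}

theorem rankReflect_apply (x y : α) : rankReflect ρ f x y = reflect (ρ y - ρ x) (f x y) :=
  rfl

theorem rankDerivative_apply (x y : α) :
    rankDerivative ρ f x y = homogDerivative (ρ y - ρ x) (f x y) :=
  rfl

theorem eulerianKernel_apply_of_le {x y : α} (hxy : x ≤ y) :
    (eulerianKernel ρ : IncidenceAlgebra R[X] α) x y = (X - 1) ^ (ρ y - ρ x) :=
  if_pos hxy

theorem eulerianKernel_apply_self (x : α) :
    (eulerianKernel ρ : IncidenceAlgebra R[X] α) x x = 1 := by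
  rw [eulerianKernel_apply_of_le le_rfl, Nat.sub_self, pow_zero]

theorem rankReflect_rankReflect : rankReflect ρ (rankReflect ρ f) = f := by
  ext x y : 1
  exact reflect_reflect

theorem rankReflect_sub : rankReflect ρ (f - g) = rankReflect ρ f - rankReflect ρ g := by
  ext x y : 1
  exact reflect_sub _ _ _

theorem rankReflect_rankDerivative (hf : IsRankBounded ρ f) :
    rankReflect ρ (rankDerivative ρ f) = (X : R[X]) • rankDerivative ρ (rankReflect ρ f) := by
  ext x y : 1
  exact reflect_homogDerivative (hf x y)

theorem isRankBounded_eulerianKernel :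
    IsRankBounded ρ (eulerianKernel ρ : IncidenceAlgebra R[X] α) := by
  intro x y
  by_cases hxy : x ≤ y
  · rw [eulerianKernel_apply_of_le hxy]
    exact natDegree_X_sub_one_pow_le _
  · simp [IncidenceAlgebra.apply_eq_zero_of_not_le hxy]

theorem rankDerivative_eulerianKernel :
    rankDerivative ρ (eulerianKernel ρ : IncidenceAlgebra R[X] α) = 0 := by
  ext x y hxy : 1
  rw [rankDerivative_apply, eulerianKernel_apply_of_le hxy, homogDerivative_X_sub_one_pow]
  rfl

theorem rankReflect_eulerianKernel_apply {x y : α} (hxy : x ≤ y) :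
    rankReflect ρ (eulerianKernel ρ : IncidenceAlgebra R[X] α) x y = (1 - X) ^ (ρ y - ρ x) := by
  rw [rankReflect_apply, eulerianKernel_apply_of_le hxy, reflect_X_sub_one_pow]

theorem coeff_middleTerm (x y : α) (k : ℕ) : (middleTerm ρ f x y).coeff k =
    if ρ y - ρ x = 2 * k + 1 then (f x y).coeff k else 0 := by
  change (ite _ _ _ : R[X]).coeff k = _
  split_ifs with hodd hk hk
  · rw [show (ρ y - ρ x) / 2 = k by omega, coeff_monomial_same]
  · rw [Nat.odd_iff] at hodd
    exact coeff_monomial_of_ne _ (by omega)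
  · exact absurd ⟨k, hk⟩ hodd
  · exact coeff_zero k

theorem coeff_middleTerm_mul (x z : α) (p : R[X]) (k : ℕ) : (middleTerm ρ f x z * p).coeff k =
    ∑ i ∈ Finset.range (k + 1),
      if ρ z - ρ x = 2 * i + 1 then (f x z).coeff i * p.coeff (k - i) else 0 := by
  rw [coeff_mul, Finset.Nat.sum_antidiagonal_eq_sum_range_succ_mk]
  simp only [coeff_middleTerm, ite_mul, zero_mul]

theorem isRankBounded_middleTerm : IsRankBounded ρ (middleTerm ρ f) := by
  intro x y
  refine natDegree_le_iff_coeff_eq_zero.mpr fun k hk ↦ ?_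
  rw [coeff_middleTerm, if_neg (by omega)]

theorem rankReflect_middleTerm :
    rankReflect ρ (middleTerm ρ f) = (X : R[X]) • middleTerm ρ f := by
  ext x y _ k
  rw [rankReflect_apply, IncidenceAlgebra.constSMul_apply, smul_eq_mul, coeff_reflect,
    coeff_middleTerm]
  rcases k with _ | k
  · rw [coeff_X_mul_zero, revAt_le (Nat.zero_le _), if_neg (by omega)]
  rw [coeff_X_mul, coeff_middleTerm]
  by_cases hk : k + 1 ≤ ρ y - ρ x
  · rw [revAt_le hk]
    split_ifs with h₁ h₂ h₂
    · rw [show ρ y - ρ x - (k + 1) = k by omega]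
    all_goals first | rfl | omega
  · rw [revAt_eq_self_of_lt (not_le.mp hk), if_neg (by omega), if_neg (by omega)]

end Rank

variable [LocallyFiniteOrder α]

theorem mul_apply_eq_sum_Ico_add [Semiring R] (f g : IncidenceAlgebra R α) {x y : α}
    (hxy : x ≤ y) : (f * g) x y = ∑ z ∈ Finset.Ico x y, f x z * g z y + f x y * g y y := by
  rw [IncidenceAlgebra.mul_apply, ← Finset.Ico_insert_right hxy,
    Finset.sum_insert Finset.right_notMem_Ico, add_comm]

theorem constSMul_mul [Semiring R] (c : R) (f g : IncidenceAlgebra R α) :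
    c • f * g = c • (f * g) := by
  ext x y : 1
  simp only [IncidenceAlgebra.mul_apply, IncidenceAlgebra.constSMul_apply, smul_mul_assoc,
    Finset.smul_sum]

theorem eq_zero_of_interval_induction [Zero R] {f : IncidenceAlgebra R α}
    (step : ∀ x y, x ≤ y → (∀ z ∈ Finset.Ico x y, f x z = 0) → f x y = 0) : f = 0 := by
  ext x y hxy
  induction hn : (Finset.Icc x y).card using Nat.strong_induction_on generalizing y with
  | _ n ih =>
    refine step x y hxy fun z hz ↦ ?_
    obtain ⟨hxz, hzy⟩ := Finset.mem_Ico.mp hz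
    exact ih _ (hn ▸ Finset.card_lt_card (Finset.Icc_ssubset_Icc_right hxy le_rfl hzy)) z hxz rfl

variable [CommRing R] (ρ : α → ℕ)

/-- The Euler relation for all nontrivial intervals. -/
def SatisfiesEulerRelation : Prop :=
  ∀ x y : α, x < y → ∑ z ∈ Finset.Icc x y, (-1 : ℤ) ^ ρ z = 0

/-- The characterization of the toric `g`-polynomials of all intervals: `g` has degree less than
half of the rank, and the lower half of `g * eulerianKernel ρ` vanishes. The latter is the
recursion `g_k = h_k - h_{k-1}`, since `(g * eulerianKernel ρ) x y = g x y - (1 - t) h x y`. -/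
structure IsToricG (g : IncidenceAlgebra R[X] α) : Prop where
  apply_self : ∀ x, g x x = 1
  coeff_eq_zero : ∀ {x y k}, x < y → ρ y - ρ x ≤ 2 * k → (g x y).coeff k = 0
  coeff_mul_kernel_eq_zero : ∀ {x y k}, x < y → 2 * k < ρ y - ρ x →
    ((g * eulerianKernel ρ : IncidenceAlgebra R[X] α) x y).coeff k = 0

variable {ρ} {f g : IncidenceAlgebra R[X] α}

theorem rank_sub_rank_eq_add (hρ : Monotone ρ) {x y z : α} (hz : z ∈ Finset.Icc x y) :
    ρ y - ρ x = (ρ z - ρ x) + (ρ y - ρ z) := by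
  obtain ⟨hxz, hzy⟩ := Finset.mem_Icc.mp hz
  have := hρ hxz
  have := hρ hzy
  omega

theorem rankReflect_mul (hρ : Monotone ρ) (hf : IsRankBounded ρ f) (hg : IsRankBounded ρ g) :
    rankReflect ρ (f * g) = rankReflect ρ f * rankReflect ρ g := by
  ext x y : 1
  simp only [rankReflect_apply, IncidenceAlgebra.mul_apply, reflect_finset_sum]
  refine Finset.sum_congr rfl fun z hz ↦ ?_
  rw [rank_sub_rank_eq_add hρ hz, reflect_mul _ _ (hf x z) (hg z y)]

theorem rankDerivative_mul (hρ : Monotone ρ) :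
    rankDerivative ρ (f * g) = rankDerivative ρ f * g + f * rankDerivative ρ g := by
  ext x y : 1
  simp only [rankDerivative_apply, IncidenceAlgebra.add_apply, IncidenceAlgebra.mul_apply]
  rw [← Finset.sum_add_distrib, homogDerivative, derivative_sum, Finset.mul_sum, Finset.mul_sum,
    ← Finset.sum_add_distrib]
  refine Finset.sum_congr rfl fun z hz ↦ ?_
  rw [← homogDerivative_mul, ← rank_sub_rank_eq_add hρ hz, homogDerivative]

theorem eulerianKernel_mul_rankReflect_self (hρ : Monotone ρ) (hE : SatisfiesEulerRelation ρ) :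
    eulerianKernel ρ * rankReflect ρ (eulerianKernel ρ : IncidenceAlgebra R[X] α) = 1 := by
  ext x y hxy : 1
  have summand : ∀ z ∈ Finset.Icc x y,
      (eulerianKernel ρ : IncidenceAlgebra R[X] α) x z * rankReflect ρ (eulerianKernel ρ) z y =
        (X - 1) ^ (ρ y - ρ x) * (-1) ^ ρ y * (((-1 : ℤ) ^ ρ z : ℤ) : R[X]) := by
    intro z hz
    obtain ⟨hxz, hzy⟩ := Finset.mem_Icc.mp hz
    have sign : (-1 : R[X]) ^ ρ y * (-1) ^ ρ z = (-1) ^ (ρ y - ρ z) := by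
      rw [← Nat.sub_add_cancel (hρ hzy), pow_add, mul_assoc, ← mul_pow, Nat.add_sub_cancel]
      simp
    rw [eulerianKernel_apply_of_le hxz, rankReflect_eulerianKernel_apply hzy, ← neg_sub X 1,
      neg_pow, rank_sub_rank_eq_add hρ hz, pow_add, ← sign]
    push_cast
    ring
  rw [IncidenceAlgebra.mul_apply, Finset.sum_congr rfl summand, ← Finset.mul_sum, ← Int.cast_sum,
    IncidenceAlgebra.one_apply]
  rcases hxy.eq_or_lt with rfl | hlt
  · simp [← mul_pow]
  · rw [hE x y hlt, if_neg hlt.ne, Int.cast_zero, mul_zero]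

theorem IsToricG.isRankBounded (hg : IsToricG ρ g) : IsRankBounded ρ g := by
  intro x y
  by_cases hxy : x ≤ y
  · rcases hxy.eq_or_lt with rfl | hlt
    · simp [hg.apply_self]
    · exact natDegree_le_iff_coeff_eq_zero.mpr fun k hk ↦ hg.coeff_eq_zero hlt (by omega)
  · simp [IncidenceAlgebra.apply_eq_zero_of_not_le hxy]

theorem mul_apply_of_forall_Ico_eq_zero {x y : α} (hxy : x ≤ y)
    (hf : ∀ z ∈ Finset.Ico x y, f x z = 0) : (f * g) x y = f x y * g y y := by
  rw [mul_apply_eq_sum_Ico_add f g hxy, Finset.sum_eq_zero fun z hz ↦ by rw [hf z hz, zero_mul],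
    zero_add]

-- The difference `δ` of the two sides satisfies `rankReflect δ = -δ * rankReflect κ`, where `κ` is
-- the kernel, so on a minimal interval where it is nonzero it is antisymmetric with vanishing
-- lower half.
theorem IsToricG.rankReflect_eq [IsAddTorsionFree R] (hρ : Monotone ρ)
    (hE : SatisfiesEulerRelation ρ) (hg : IsToricG ρ g) :
    rankReflect ρ g = g * eulerianKernel ρ := by
  set κ : IncidenceAlgebra R[X] α := eulerianKernel ρ with hκ
  have hκκ : κ * rankReflect ρ κ = 1 := eulerianKernel_mul_rankReflect_self hρ hE
  have reflect_diff : rankReflect ρ (rankReflect ρ g - g * κ) =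
      -((rankReflect ρ g - g * κ) * rankReflect ρ κ) := by
    rw [rankReflect_sub, rankReflect_rankReflect,
      rankReflect_mul hρ hg.isRankBounded isRankBounded_eulerianKernel, sub_mul, mul_assoc, hκκ,
      mul_one, neg_sub]
  refine sub_eq_zero.mp (eq_zero_of_interval_induction fun x y hxy hbelow ↦ ?_)
  refine eq_zero_of_reflect_eq_neg (n := ρ y - ρ x) ?_ fun k hk ↦ ?_
  · rw [← rankReflect_apply, reflect_diff, IncidenceAlgebra.neg_apply,
      mul_apply_of_forall_Ico_eq_zero hxy hbelow, rankReflect_apply, hκ,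
      eulerianKernel_apply_self, Nat.sub_self, reflect_one, pow_zero, mul_one]
  · have hlt : x < y := hxy.lt_of_ne fun h ↦ by simp [h] at hk
    rw [IncidenceAlgebra.sub_apply, coeff_sub, hg.coeff_mul_kernel_eq_zero hlt hk,
      rankReflect_apply, coeff_reflect, revAt_le (by omega),
      hg.coeff_eq_zero hlt (by omega), sub_zero]

theorem IsToricG.coeff_middleTerm_mul_apply (hρ : Monotone ρ) (hg : IsToricG ρ g) {x y : α}
    (hxy : x ≤ y) {k : ℕ} (hk : ρ y - ρ x ≤ 2 * k + 1) :
    ((middleTerm ρ f * g : IncidenceAlgebra R[X] α) x y).coeff k =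
      (middleTerm ρ f x y).coeff k := by
  rw [mul_apply_eq_sum_Ico_add _ _ hxy, hg.apply_self, mul_one, coeff_add, finsetSum_coeff,
    Finset.sum_eq_zero, zero_add]
  intro z hz
  rw [coeff_middleTerm_mul]
  refine Finset.sum_eq_zero fun i _ ↦ ite_eq_right_iff.mpr fun hxz ↦ ?_
  have := rank_sub_rank_eq_add hρ (Finset.Ico_subset_Icc_self hz)
  rw [hg.coeff_eq_zero (Finset.mem_Ico.mp hz).2 (by omega), mul_zero]

-- Both sides satisfy `rankReflect f = X • (f * κ)`, a relation that recovers the lower half of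
-- every entry from its upper half and from the shorter intervals.
theorem IsToricG.eq_middleTerm_mul (hρ : Monotone ρ) (hg : IsToricG ρ g)
    (hgκ : rankReflect ρ g = g * eulerianKernel ρ)
    (hf : rankReflect ρ f = (X : R[X]) • (f * eulerianKernel ρ))
    (hhigh : ∀ x y k, ρ y - ρ x ≤ 2 * k → (f x y).coeff k = 0) : f = middleTerm ρ f * g := by
  set κ : IncidenceAlgebra R[X] α := eulerianKernel ρ with hκ
  have reflect_diff : rankReflect ρ (f - middleTerm ρ f * g) =
      (X : R[X]) • ((f - middleTerm ρ f * g) * κ) := by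
    rw [rankReflect_sub, hf, rankReflect_mul hρ isRankBounded_middleTerm hg.isRankBounded,
      rankReflect_middleTerm, hgκ, constSMul_mul, sub_mul, mul_assoc]
    ext x y : 1
    simp only [IncidenceAlgebra.sub_apply, IncidenceAlgebra.constSMul_apply, smul_sub]
  refine sub_eq_zero.mp (eq_zero_of_interval_induction fun x y hxy hbelow ↦ ?_)
  refine eq_zero_of_reflect_eq_X_mul (n := ρ y - ρ x) ?_ fun k hk ↦ ?_
  · rw [← rankReflect_apply, reflect_diff, IncidenceAlgebra.constSMul_apply,
      mul_apply_of_forall_Ico_eq_zero hxy hbelow, hκ, eulerianKernel_apply_self, mul_one,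
      smul_eq_mul]
  · rw [IncidenceAlgebra.sub_apply, coeff_sub, hg.coeff_middleTerm_mul_apply hρ hxy hk,
      coeff_middleTerm, sub_eq_zero]
    split_ifs with hodd
    · rfl
    · exact hhigh x y k (by omega)

theorem IsToricG.coeff_rankDerivative_eq_zero (hg : IsToricG ρ g) {x y : α} {k : ℕ}
    (hk : ρ y - ρ x ≤ 2 * k) : (rankDerivative ρ g x y).coeff k = 0 := by
  rw [rankDerivative_apply, coeff_homogDerivative]
  by_cases hxy : x ≤ y
  · rcases hxy.eq_or_lt with rfl | hlt
    · rw [hg.apply_self, coeff_one, coeff_one]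
      rcases k with _ | k <;> simp
    · rw [hg.coeff_eq_zero hlt hk, hg.coeff_eq_zero hlt (by omega), mul_zero, mul_zero, add_zero]
  · simp [IncidenceAlgebra.apply_eq_zero_of_not_le hxy]

theorem IsToricG.rankDerivative_eq [IsAddTorsionFree R] (hρ : Monotone ρ)
    (hE : SatisfiesEulerRelation ρ) (hg : IsToricG ρ g) :
    rankDerivative ρ g = middleTerm ρ (rankDerivative ρ g) * g := by
  have hgκ := hg.rankReflect_eq hρ hE
  refine hg.eq_middleTerm_mul hρ hgκ ?_ fun x y k ↦ hg.coeff_rankDerivative_eq_zero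
  rw [rankReflect_rankDerivative hg.isRankBounded, hgκ, rankDerivative_mul hρ,
    rankDerivative_eulerianKernel, mul_zero, add_zero]

theorem IsToricG.coeff_rankDerivative_middle (hg : IsToricG ρ g) {x z : α} {i : ℕ}
    (hz : ρ z - ρ x = 2 * i + 1) :
    (rankDerivative ρ g x z).coeff i = ((i : R) + 1) * (g x z).coeff i := by
  have coeff_succ : (g x z).coeff (i + 1) = 0 := by
    by_cases hxz : x < z
    · exact hg.coeff_eq_zero hxz (by omega)
    · have hne : x ≠ z := fun h ↦ by simp [h] at hz
      rw [IncidenceAlgebra.apply_eq_zero_of_not_le fun h ↦ hxz (h.lt_of_ne hne), coeff_zero]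
  rw [rankDerivative_apply, coeff_homogDerivative, coeff_succ, hz]
  push_cast
  ring

theorem IsToricG.kalai_identity [IsAddTorsionFree R] (hρ : Monotone ρ)
    (hE : SatisfiesEulerRelation ρ) (hg : IsToricG ρ g) (x y : α) (k : ℕ) :
    ((k : R) + 1) * (g x y).coeff (k + 1) + (((ρ y - ρ x : ℕ) : R) - k) * (g x y).coeff k =
      ∑ i ∈ Finset.range (k + 1), ((i : R) + 1) *
        ∑ z ∈ Finset.Icc x y with ρ z - ρ x = 2 * i + 1,
          (g x z).coeff i * (g z y).coeff (k - i) := by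
  rw [← coeff_homogDerivative, ← rankDerivative_apply, hg.rankDerivative_eq hρ hE,
    IncidenceAlgebra.mul_apply, finsetSum_coeff]
  simp only [coeff_middleTerm_mul]
  rw [Finset.sum_comm]
  refine Finset.sum_congr rfl fun i _ ↦ ?_
  rw [← Finset.sum_filter, Finset.mul_sum]
  refine Finset.sum_congr rfl fun z hz ↦ ?_
  rw [hg.coeff_rankDerivative_middle (Finset.mem_filter.mp hz).2, mul_assoc]

end IncidenceAlgebra

section AffineSpan

variable {K E A : Type*} [Field K] [AddCommGroup E] [Module K E] [AddTorsor E A]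

theorem eq_zero_of_mem_affineSpan {s : Set A} {v : A} (hv : v ∈ affineSpan K s) {φ : A →ᵃ[K] K}
    (hφ : ∀ x ∈ s, φ x = 0) : φ v = 0 :=
  AffineMap.eqOn_affineSpan (g := AffineMap.const K A (0 : K)) hφ hv

theorem exists_affineMap_eq_zero_eq_one {s : Set A} {v : A} (hv : v ∉ affineSpan K s) :
    ∃ ψ : A →ᵃ[K] K, (∀ x ∈ s, ψ x = 0) ∧ ψ v = 1 := by
  rcases s.eq_empty_or_nonempty with rfl | ⟨a, ha⟩
  · exact ⟨AffineMap.const K A 1, by simp, rfl⟩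
  have ha' : a ∈ affineSpan K s := subset_affineSpan K s ha
  obtain ⟨f, hfv, hf⟩ := Submodule.exists_le_ker_of_notMem
    (mt (AffineSubspace.vsub_right_mem_direction_iff_mem ha' v).mp hv)
  refine ⟨((f (v -ᵥ a))⁻¹ • f).toAffineMap.comp (AffineEquiv.vaddConst K a).symm, ?_, ?_⟩
  · intro x hx
    have hxa : f (x -ᵥ a) = 0 :=
      hf (AffineSubspace.vsub_mem_direction (subset_affineSpan K s hx) ha')
    simp [hxa]
  · simp [hfv]

end AffineSpan

section FaceRank

variable {V : Type*} [AddCommGroup V] [Module ℝ V]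

/-- The rank of a face in the face lattice: its dimension plus one, so that the empty face has
rank `0`. -/
noncomputable def faceRank (A : Set V) : ℕ :=
  (pdim A + 1).toNat

theorem faceRank_empty : faceRank (∅ : Set V) = 0 := by
  simp [faceRank, pdim]

theorem faceRank_of_nonempty {A : Set V} (hA : A.Nonempty) :
    faceRank A = Module.finrank ℝ (vectorSpan ℝ A) + 1 := by
  rw [faceRank, pdim, if_neg hA.ne_empty, direction_affineSpan]
  omega

theorem pdim_eq_faceRank_sub_one (A : Set V) : pdim A = (faceRank A : ℤ) - 1 := by
  rcases A.eq_empty_or_nonempty with rfl | hA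
  · simp [faceRank_empty, pdim]
  · rw [faceRank_of_nonempty hA, pdim, if_neg hA.ne_empty, direction_affineSpan]
    omega

theorem faceRank_convexHull (A : Set V) : faceRank (convexHull ℝ A) = faceRank A := by
  rw [faceRank, faceRank, pdim, pdim, affineSpan_convexHull]
  simp only [convexHull_eq_empty]

theorem faceRank_mono {A B : Set V} (hB : B.Finite) (hAB : A ⊆ B) : faceRank A ≤ faceRank B := by
  rcases A.eq_empty_or_nonempty with rfl | hA
  · exact faceRank_empty.trans_le (Nat.zero_le _)
  · have := finiteDimensional_vectorSpan_of_finite ℝ hB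
    rw [faceRank_of_nonempty hA, faceRank_of_nonempty (hA.mono hAB)]
    exact Nat.succ_le_succ (Submodule.finrank_mono (vectorSpan_mono ℝ hAB))

theorem faceRank_insert_of_mem_affineSpan {A : Set V} {v : V} (hv : v ∈ affineSpan ℝ A) :
    faceRank (insert v A) = faceRank A := by
  rw [faceRank_of_nonempty (Set.insert_nonempty v A), vectorSpan_insert_eq_vectorSpan hv,
    faceRank_of_nonempty ((affineSpan_nonempty ℝ).mp ⟨v, hv⟩)]

theorem faceRank_insert_of_notMem_affineSpan {A : Set V} (hA : A.Finite) {v : V}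
    (hv : v ∉ affineSpan ℝ A) : faceRank (insert v A) = faceRank A + 1 := by
  rcases A.eq_empty_or_nonempty with rfl | ⟨a, ha⟩
  · rw [insert_empty_eq, faceRank_of_nonempty (Set.singleton_nonempty v), vectorSpan_singleton,
      finrank_bot, faceRank_empty]
  have hlt : vectorSpan ℝ A < vectorSpan ℝ (insert v A) := by
    refine (vectorSpan_mono ℝ (Set.subset_insert v A)).lt_of_not_ge fun hle ↦ hv ?_
    rw [← AffineSubspace.vsub_right_mem_direction_iff_mem (subset_affineSpan ℝ A ha),
      direction_affineSpan]
    exact hle (vsub_mem_vectorSpan ℝ (Set.mem_insert v A) (Set.mem_insert_of_mem v ha))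
  have := finiteDimensional_vectorSpan_of_finite ℝ (hA.insert v)
  rw [faceRank_of_nonempty (Set.insert_nonempty v A), faceRank_of_nonempty ⟨a, ha⟩]
  have := Submodule.finrank_lt_finrank_of_lt hlt
  have := finrank_vectorSpan_insert_le_set ℝ A v
  omega

end FaceRank

section SignVectors

variable {V : Type*} [AddCommGroup V] [Module ℝ V]

/-- `N`, `Z`, `P` consist of points at which a common affine functional is negative, zero and
positive: the sign vector with these three parts is a covector of the configuration
`N ∪ Z ∪ P`. -/
def HasSigns (N Z P : Finset V) : Prop :=
  ∃ φ : V →ᵃ[ℝ] ℝ, (∀ x ∈ N, φ x < 0) ∧ (∀ x ∈ Z, φ x = 0) ∧ ∀ x ∈ P, 0 < φ x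

/-- The contribution of a sign vector to the Euler characteristic: `(-1)^rank` of its zero set if
it is realizable, and `0` otherwise. -/
noncomputable def signEuler (N Z P : Finset V) : ℤ :=
  if HasSigns N Z P then (-1) ^ faceRank (Z : Set V) else 0

variable {N Z P : Finset V} {v : V}

theorem hasSigns_insert_zero_iff_of_mem_affineSpan (hv : v ∈ affineSpan ℝ (Z : Set V)) :
    HasSigns N (insert v Z) P ↔ HasSigns N Z P := by
  refine exists_congr fun φ ↦ and_congr_right fun _ ↦ and_congr_left fun _ ↦ ?_
  exact ⟨fun h x hx ↦ h x (Finset.mem_insert_of_mem hx), fun h ↦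
    (Finset.forall_mem_insert _ _ _).mpr ⟨eq_zero_of_mem_affineSpan hv h, h⟩⟩

theorem not_hasSigns_insert_neg_of_mem_affineSpan (hv : v ∈ affineSpan ℝ (Z : Set V)) :
    ¬HasSigns (insert v N) Z P := fun ⟨_, hN, hZ, _⟩ ↦
  (hN v (Finset.mem_insert_self v N)).ne (eq_zero_of_mem_affineSpan hv hZ)

theorem not_hasSigns_insert_pos_of_mem_affineSpan (hv : v ∈ affineSpan ℝ (Z : Set V)) :
    ¬HasSigns N Z (insert v P) := fun ⟨_, _, hZ, hP⟩ ↦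
  (hP v (Finset.mem_insert_self v P)).ne' (eq_zero_of_mem_affineSpan hv hZ)

theorem hasSigns_iff_exists_insert : HasSigns N Z P ↔
    HasSigns (insert v N) Z P ∨ HasSigns N (insert v Z) P ∨ HasSigns N Z (insert v P) := by
  simp only [HasSigns, Finset.forall_mem_insert]
  constructor
  · rintro ⟨φ, hN, hZ, hP⟩
    rcases lt_trichotomy (φ v) 0 with hv | hv | hv
    · exact .inl ⟨φ, ⟨hv, hN⟩, hZ, hP⟩
    · exact .inr (.inl ⟨φ, hN, ⟨hv, hZ⟩, hP⟩)
    · exact .inr (.inr ⟨φ, hN, hZ, hv, hP⟩)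
  · rintro (⟨φ, ⟨_, hN⟩, hZ, hP⟩ | ⟨φ, hN, ⟨_, hZ⟩, hP⟩ | ⟨φ, hN, hZ, _, hP⟩) <;>
      exact ⟨φ, hN, hZ, hP⟩

theorem HasSigns.insert_zero (hneg : HasSigns (insert v N) Z P)
    (hpos : HasSigns N Z (insert v P)) : HasSigns N (insert v Z) P := by
  simp only [HasSigns, Finset.forall_mem_insert] at hneg hpos ⊢
  obtain ⟨φ, ⟨hφv, hφN⟩, hφZ, hφP⟩ := hneg
  obtain ⟨ψ, hψN, hψZ, hψv, hψP⟩ := hpos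
  refine ⟨ψ v • φ - φ v • ψ, fun x hx ↦ ?_, ⟨?_, fun x hx ↦ ?_⟩, fun x hx ↦ ?_⟩
  · have := mul_neg_of_pos_of_neg hψv (hφN x hx)
    have := mul_pos_of_neg_of_neg hφv (hψN x hx)
    simpa using by linarith
  · simp [mul_comm]
  · simp [hφZ x hx, hψZ x hx]
  · have := mul_pos hψv (hφP x hx)
    have := mul_neg_of_neg_of_pos hφv (hψP x hx)
    simpa using by linarith

theorem exists_pos_forall_add_mul_neg_pos {φ : V →ᵃ[ℝ] ℝ} (ψ : V →ᵃ[ℝ] ℝ)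
    (hN : ∀ x ∈ N, φ x < 0) (hP : ∀ x ∈ P, 0 < φ x) :
    ∃ ε > 0, (∀ x ∈ N, φ x + ε * ψ x < 0) ∧ ∀ x ∈ P, 0 < φ x + ε * ψ x := by
  have tendsto_perturbed (x : V) :
      Filter.Tendsto (fun ε : ℝ ↦ φ x + ε * ψ x) (nhdsWithin 0 (.Ioi 0)) (nhds (φ x)) :=
    (Continuous.tendsto' (by fun_prop) _ _ (by simp)).mono_left nhdsWithin_le_nhds
  have eventually_pos : ∀ᶠ ε : ℝ in nhdsWithin 0 (.Ioi 0), 0 < ε := self_mem_nhdsWithin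
  refine (eventually_pos.and (Filter.Eventually.and ?_ ?_)).exists <;>
    rw [Filter.eventually_all_finset]
  · exact fun x hx ↦ (tendsto_perturbed x).eventually_lt_const (hN x hx)
  · exact fun x hx ↦ (tendsto_perturbed x).eventually_const_lt (hP x hx)

theorem HasSigns.insert_pos (h : HasSigns N (insert v Z) P)
    (hv : v ∉ affineSpan ℝ (Z : Set V)) : HasSigns N Z (insert v P) := by
  simp only [HasSigns, Finset.forall_mem_insert] at h ⊢
  obtain ⟨φ, hN, ⟨hφv, hφZ⟩, hP⟩ := h
  obtain ⟨ψ, hψZ, hψv⟩ := exists_affineMap_eq_zero_eq_one hv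
  obtain ⟨ε, hε, hεN, hεP⟩ := exists_pos_forall_add_mul_neg_pos ψ hN hP
  refine ⟨φ + ε • ψ, hεN, fun x hx ↦ ?_, ?_, hεP⟩
  · simp [hφZ x hx, hψZ x hx]
  · simpa [hφv, hψv] using hε

theorem HasSigns.symm (h : HasSigns N Z P) : HasSigns P Z N := by
  obtain ⟨φ, hN, hZ, hP⟩ := h
  exact ⟨-φ, by simpa using hP, by simpa using hZ, by simpa using hN⟩

theorem signEuler_eq_add (N Z P : Finset V) (v : V) : signEuler N Z P =
    signEuler (insert v N) Z P + signEuler N (insert v Z) P + signEuler N Z (insert v P) := by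
  by_cases hv : v ∈ affineSpan ℝ (Z : Set V)
  · simp only [signEuler, not_hasSigns_insert_neg_of_mem_affineSpan hv,
      not_hasSigns_insert_pos_of_mem_affineSpan hv, hasSigns_insert_zero_iff_of_mem_affineSpan hv,
      Finset.coe_insert, faceRank_insert_of_mem_affineSpan hv, if_false, zero_add, add_zero]
  · have insert_zero_iff : HasSigns N (insert v Z) P ↔
        HasSigns (insert v N) Z P ∧ HasSigns N Z (insert v P) :=
      ⟨fun h ↦ ⟨(h.symm.insert_pos hv).symm, h.insert_pos hv⟩, fun h ↦ h.1.insert_zero h.2⟩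
    have hsigns := hasSigns_iff_exists_insert (N := N) (Z := Z) (P := P) (v := v)
    simp only [signEuler, hsigns, insert_zero_iff, Finset.coe_insert,
      faceRank_insert_of_notMem_affineSpan Z.finite_toSet hv, pow_succ]
    by_cases hneg : HasSigns (insert v N) Z P <;> by_cases hpos : HasSigns N Z (insert v P) <;>
      simp [hneg, hpos]

theorem sum_powerset_insert_signEuler {S : Finset V} (hv : v ∉ S) (N K : Finset V) :
    ∑ A ∈ (insert v S).powerset, signEuler N (K ∪ A) (insert v S \ A) =
      ∑ A ∈ S.powerset, signEuler N (K ∪ A) (S \ A) -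
        ∑ A ∈ S.powerset, signEuler (insert v N) (K ∪ A) (S \ A) := by
  rw [Finset.sum_powerset_insert hv, ← Finset.sum_add_distrib, ← Finset.sum_sub_distrib]
  refine Finset.sum_congr rfl fun A hA ↦ ?_
  have hvA : v ∉ A := fun h ↦ hv (Finset.mem_powerset.mp hA h)
  rw [Finset.insert_sdiff_of_notMem _ hvA, Finset.insert_sdiff_insert,
    Finset.sdiff_insert_of_notMem hv, Finset.union_insert,
    signEuler_eq_add N (K ∪ A) (S \ A) v]
  ring

-- Move the points of `S` one at a time to the negative side.
theorem sum_powerset_signEuler {φ : V →ᵃ[ℝ] ℝ} {K S : Finset V} (hK : ∀ x ∈ K, φ x = 0)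
    (hS : ∀ x ∈ S, φ x < 0) (hN : ∀ x ∈ N, φ x < 0) :
    ∑ A ∈ S.powerset, signEuler N (K ∪ A) (S \ A) =
      if S = ∅ then (-1) ^ faceRank (K : Set V) else 0 := by
  induction S using Finset.induction_on generalizing N with
  | empty =>
    have : HasSigns N K ∅ := ⟨φ, hN, hK, by simp⟩
    simp [signEuler, this]
  | insert v S hv ih =>
    rw [Finset.forall_mem_insert] at hS
    rw [sum_powerset_insert_signEuler hv, ih hS.2 hN,
      ih hS.2 ((Finset.forall_mem_insert _ _ _).mpr ⟨hS.1, hN⟩), sub_self,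
      if_neg (Finset.insert_ne_empty v S)]

theorem HasSigns.sum_Icc_eq_zero {K S : Finset V} (h : HasSigns ∅ K (S \ K)) (hKS : K ⊂ S) :
    ∑ A ∈ Finset.Icc K S, signEuler ∅ A (S \ A) = 0 := by
  obtain ⟨φ, -, hK, hpos⟩ := h
  have union_injOn : Set.InjOn (K ∪ ·) ((S \ K).powerset : Set (Finset V)) := fun A hA B hB h ↦ by
    have hA := Finset.disjoint_of_subset_left (Finset.mem_powerset.mp hA) Finset.sdiff_disjoint
    have hB := Finset.disjoint_of_subset_left (Finset.mem_powerset.mp hB) Finset.sdiff_disjoint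
    rw [← Finset.union_sdiff_cancel_left hA.symm, ← Finset.union_sdiff_cancel_left hB.symm]
    exact congrArg (· \ K) h
  rw [Finset.Icc_eq_image_powerset hKS.subset, Finset.sum_image union_injOn]
  simp only [← Finset.sup_eq_union, ← sdiff_sdiff_left]
  exact (sum_powerset_signEuler (φ := -φ) (by simpa using hK) (by simpa using hpos)
    (by simp)).trans (if_neg (Finset.sdiff_nonempty.mpr hKS.2).ne_empty)

end SignVectors

section Faces

variable {V : Type*} [AddCommGroup V] [Module ℝ V]

theorem nonneg_of_mem_convexHull {s : Set V} {φ : V →ᵃ[ℝ] ℝ} (hφ : ∀ x ∈ s, 0 ≤ φ x) {x : V}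
    (hx : x ∈ convexHull ℝ s) : 0 ≤ φ x :=
  convexHull_min hφ ((convex_Ici 0).affine_preimage φ) hx

theorem convexHull_sep_eq_zero {s : Set V} {φ : V →ᵃ[ℝ] ℝ} (hφ : ∀ x ∈ s, 0 ≤ φ x) :
    convexHull ℝ {x ∈ s | φ x = 0} = {x ∈ convexHull ℝ s | φ x = 0} := by
  refine Set.Subset.antisymm (fun x hx ↦ ⟨convexHull_mono (Set.sep_subset _ _) hx, ?_⟩)
    fun x ⟨hx, hx0⟩ ↦ ?_
  · exact eq_zero_of_mem_affineSpan (convexHull_subset_affineSpan _ hx) fun y hy ↦ hy.2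
  suffices convexHull ℝ s ⊆ {x | 0 ≤ φ x ∧ (φ x = 0 → x ∈ convexHull ℝ {x ∈ s | φ x = 0})} from
    (this hx).2 hx0
  refine convexHull_min (fun x hx ↦ ⟨hφ x hx, fun h ↦ subset_convexHull ℝ _ ⟨hx, h⟩⟩) ?_
  refine convex_iff_forall_pos.mpr fun x ⟨hx, hx'⟩ y ⟨hy, hy'⟩ a b ha hb hab ↦ ?_
  have hax : 0 ≤ a * φ x := mul_nonneg ha.le hx
  have hby : 0 ≤ b * φ y := mul_nonneg hb.le hy
  rw [Set.mem_ofPred_eq, Convex.combo_affine_apply hab, smul_eq_mul, smul_eq_mul]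
  refine ⟨add_nonneg hax hby, fun h ↦ ?_⟩
  rw [add_eq_zero_iff_of_nonneg hax hby, mul_eq_zero_iff_left ha.ne', mul_eq_zero_iff_left hb.ne']
    at h
  exact convex_convexHull ℝ _ (hx' h.1) (hy' h.2) ha.le hb.le hab

theorem IsFace.subset {P F : Set V} (h : IsFace P F) : F ⊆ P := by
  rcases h with rfl | rfl | ⟨l, rfl⟩
  exacts [subset_rfl, Set.empty_subset _, Set.sep_subset _ _]

theorem isFace_sep_eq_zero {P : Set V} {φ : V →ᵃ[ℝ] ℝ} (hφ : ∀ x ∈ P, 0 ≤ φ x) :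
    IsFace P {x ∈ P | φ x = 0} := by
  rcases {x ∈ P | φ x = 0}.eq_empty_or_nonempty with hempty | ⟨a, haP, ha⟩
  · exact .inr (.inl hempty)
  refine .inr (.inr ⟨-φ.linear, Set.ext fun x ↦ and_congr_right fun hx ↦ ?_⟩)
  have linear_sub (y : V) : φ.linear y - φ.linear a = φ y := by
    rw [← map_sub, ← vsub_eq_sub, φ.linearMap_vsub, ha, vsub_eq_sub, sub_zero]
  have le_iff (y : V) : (-φ.linear) y ≤ (-φ.linear) x ↔ φ x ≤ φ y := by
    rw [LinearMap.neg_apply, LinearMap.neg_apply, ← linear_sub x, ← linear_sub y]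
    simp
  simp only [le_iff]
  exact ⟨fun hx0 y hy ↦ hx0.trans_le (hφ y hy), fun h ↦ ((h a haP).trans_eq ha).antisymm (hφ x hx)⟩

theorem IsFace.exists_affineMap {P F : Set V} (hP : IsPolytope P) (hF : IsFace P F) :
    ∃ φ : V →ᵃ[ℝ] ℝ, (∀ x ∈ P, 0 ≤ φ x) ∧ F = {x ∈ P | φ x = 0} := by
  rcases hF with rfl | rfl | ⟨l, rfl⟩
  · exact ⟨0, by simp, by simp⟩
  · exact ⟨AffineMap.const ℝ V 1, by simp, by simp⟩
  obtain ⟨S, rfl⟩ := hP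
  rcases S.eq_empty_or_nonempty with rfl | hS
  · exact ⟨0, by simp, by simp⟩
  obtain ⟨s, hs, hmax⟩ := S.exists_max_image l hS
  have hφ : ∀ x ∈ convexHull ℝ (S : Set V), 0 ≤ (AffineMap.const ℝ V (l s) - l.toAffineMap) x :=
    fun x ↦ nonneg_of_mem_convexHull fun t ht ↦ sub_nonneg.mpr (hmax t ht)
  refine ⟨_, hφ, Set.ext fun x ↦ and_congr_right fun hx ↦ ?_⟩
  exact ⟨fun h ↦ (sub_nonpos.mpr (h s (subset_convexHull ℝ _ hs))).antisymm (hφ x hx),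
    fun h y hy ↦ (sub_nonneg.mp (hφ y hy)).trans_eq (sub_eq_zero.mp h)⟩

theorem IsFace.of_subset_of_subset {P Q F : Set V} (hP : IsPolytope P) (hF : IsFace P F)
    (hFQ : F ⊆ Q) (hQP : Q ⊆ P) : IsFace Q F := by
  obtain ⟨φ, hφ, rfl⟩ := hF.exists_affineMap hP
  convert isFace_sep_eq_zero fun x hx ↦ hφ x (hQP hx) using 1
  exact Set.ext fun x ↦ ⟨fun hx ↦ ⟨hFQ hx, hx.2⟩, fun hx ↦ ⟨hQP hx.1, hx.2⟩⟩

theorem IsFace.eq_convexHull_filter {S : Finset V} {F : Set V}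
    (hF : IsFace (convexHull ℝ (S : Set V)) F) :
    F = convexHull ℝ (S.filter (· ∈ F) : Set V) := by
  obtain ⟨φ, hφ, rfl⟩ := hF.exists_affineMap ⟨S, rfl⟩
  have hS : (S : Set V) ⊆ convexHull ℝ (S : Set V) := subset_convexHull ℝ _
  refine (convexHull_sep_eq_zero fun x hx ↦ hφ x (hS hx)).symm.trans ?_
  rw [Finset.coe_filter]
  congr 1
  exact Set.ext fun x ↦ and_congr_right fun hx ↦ ⟨fun h ↦ ⟨hS hx, h⟩, fun h ↦ h.2⟩

theorem IsPolytope.isPolytope_of_isFace {P F : Set V} (hP : IsPolytope P) (hF : IsFace P F) :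
    IsPolytope F := by
  obtain ⟨S, rfl⟩ := hP
  exact ⟨_, hF.eq_convexHull_filter⟩

theorem IsPolytope.finite_setOf_isFace {P : Set V} (hP : IsPolytope P) :
    {F | IsFace P F}.Finite := by
  obtain ⟨S, rfl⟩ := hP
  refine (S.powerset.finite_toSet.image fun A : Finset V ↦ convexHull ℝ (A : Set V)).subset
    fun F hF ↦ ?_
  exact ⟨S.filter (· ∈ F), Finset.mem_powerset.mpr (Finset.filter_subset _ S),
    hF.eq_convexHull_filter.symm⟩

theorem exists_forall_pos_imp_mul_add_pos {ι : Type*} (S : Finset ι) (f g : ι → ℝ) :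
    ∃ c : ℝ, ∀ i ∈ S, 0 < f i → 0 < c * f i + g i := by
  refine Filter.Eventually.exists (f := Filter.atTop) ?_
  simp only [Filter.eventually_all_finset, Filter.eventually_imp_distrib_left]
  exact fun i _ hi ↦ (Filter.tendsto_atTop_add_const_right _ _
    (Filter.tendsto_id.atTop_mul_const hi)).eventually_gt_atTop 0

theorem IsFace.trans {P Q F : Set V} (hP : IsPolytope P) (hQ : IsFace P Q) (hF : IsFace Q F) :
    IsFace P F := by
  obtain ⟨ψ, hψ, rfl⟩ := hF.exists_affineMap (hP.isPolytope_of_isFace hQ)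
  obtain ⟨φ, hφ, rfl⟩ := hQ.exists_affineMap hP
  obtain ⟨S, rfl⟩ := hP
  have hφS (x) (hx : x ∈ (S : Set V)) : 0 ≤ φ x := hφ x (subset_convexHull ℝ _ hx)
  rw [← convexHull_sep_eq_zero hφS] at hψ ⊢
  have hψS (x) (hx : x ∈ {x ∈ (S : Set V) | φ x = 0}) : 0 ≤ ψ x :=
    hψ x (subset_convexHull ℝ _ hx)
  obtain ⟨c, hc⟩ := exists_forall_pos_imp_mul_add_pos S φ ψ
  have hχ (x) (hx : x ∈ (S : Set V)) :
      0 ≤ (c • φ + ψ) x ∧ ((c • φ + ψ) x = 0 ↔ φ x = 0 ∧ ψ x = 0) := by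
    change 0 ≤ c * φ x + ψ x ∧ (c * φ x + ψ x = 0 ↔ φ x = 0 ∧ ψ x = 0)
    rcases (hφS x hx).eq_or_lt with h0 | hpos
    · simpa [← h0] using hψS x ⟨hx, h0.symm⟩
    · exact ⟨(hc x hx hpos).le, by simp [hpos.ne', (hc x hx hpos).ne']⟩
  rw [← convexHull_sep_eq_zero hψS]
  convert isFace_sep_eq_zero fun x hx ↦ nonneg_of_mem_convexHull (fun s hs ↦ (hχ s hs).1) hx using 1
  rw [← convexHull_sep_eq_zero fun s hs ↦ (hχ s hs).1]
  congr 1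
  exact Set.ext fun x ↦ and_assoc.trans (and_congr_right fun hx ↦ (hχ x hx).2.symm)

theorem IsFace.faceRank_lt {P F : Set V} (hP : IsPolytope P) (hF : IsFace P F) (hne : F ≠ P) :
    faceRank F < faceRank P := by
  obtain ⟨S, rfl⟩ := hP
  obtain ⟨φ, -, hFφ⟩ := hF.exists_affineMap ⟨S, rfl⟩
  obtain ⟨s, hs, hsF⟩ : ∃ s ∈ S, s ∉ F := by
    by_contra! hall
    exact hne (hF.eq_convexHull_filter.trans (by rw [Finset.filter_true_of_mem hall]))
  have hs_span : s ∉ affineSpan ℝ (S.filter (· ∈ F) : Set V) := by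
    refine fun hmem ↦ hsF (hFφ ▸ ⟨subset_convexHull ℝ _ hs, eq_zero_of_mem_affineSpan hmem ?_⟩)
    intro x hx
    exact (hFφ ▸ (Finset.mem_filter.mp hx).2 : x ∈ {x ∈ _ | φ x = 0}).2
  calc faceRank F = faceRank (S.filter (· ∈ F) : Set V) := by
        conv_lhs => rw [hF.eq_convexHull_filter, faceRank_convexHull]
    _ < faceRank (insert s (S.filter (· ∈ F) : Set V)) := by
        rw [faceRank_insert_of_notMem_affineSpan (Finset.finite_toSet _) hs_span]
        exact Nat.lt_succ_self _
    _ ≤ faceRank (S : Set V) := faceRank_mono S.finite_toSet <|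
        Set.insert_subset hs (Finset.coe_subset.mpr (Finset.filter_subset _ S))
    _ = faceRank (convexHull ℝ (S : Set V)) := (faceRank_convexHull _).symm

theorem IsFace.hasSigns {S : Finset V} {F : Set V} (hF : IsFace (convexHull ℝ (S : Set V)) F) :
    HasSigns ∅ (S.filter (· ∈ F)) (S \ S.filter (· ∈ F)) := by
  obtain ⟨φ, hφ, hFφ⟩ := hF.exists_affineMap ⟨S, rfl⟩
  have mem_iff : ∀ x ∈ S, x ∈ F ↔ φ x = 0 := fun x hx ↦ by
    rw [hFφ]
    exact and_iff_right (subset_convexHull ℝ _ hx)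
  rw [← Finset.filter_not]
  refine ⟨φ, by simp, fun x hx ↦ ?_, fun x hx ↦ ?_⟩ <;> rw [Finset.mem_filter] at hx
  · exact (mem_iff x hx.1).mp hx.2
  · exact (hφ x (subset_convexHull ℝ _ hx.1)).lt_of_ne' (mt (mem_iff x hx.1).mpr hx.2)

theorem HasSigns.exists_eq_sep_eq_zero {A S : Finset V} (hAS : A ⊆ S) (h : HasSigns ∅ A (S \ A)) :
    ∃ φ : V →ᵃ[ℝ] ℝ, (∀ x ∈ S, 0 ≤ φ x) ∧ (A : Set V) = {x ∈ (S : Set V) | φ x = 0} := by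
  obtain ⟨φ, -, hA, hpos⟩ := h
  refine ⟨φ, fun x hx ↦ ?_, Set.ext fun x ↦ ⟨fun hx ↦ ⟨hAS hx, hA x hx⟩, fun ⟨hx, h0⟩ ↦ ?_⟩⟩
  · by_cases hxA : x ∈ A
    · exact (hA x hxA).ge
    · exact (hpos x (Finset.mem_sdiff.mpr ⟨hx, hxA⟩)).le
  · by_contra hxA
    exact (hpos x (Finset.mem_sdiff.mpr ⟨hx, hxA⟩)).ne' h0

theorem HasSigns.isFace_convexHull {A S : Finset V} (hAS : A ⊆ S) (h : HasSigns ∅ A (S \ A)) :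
    IsFace (convexHull ℝ (S : Set V)) (convexHull ℝ (A : Set V)) := by
  obtain ⟨φ, hφ, hA⟩ := h.exists_eq_sep_eq_zero hAS
  rw [hA, convexHull_sep_eq_zero hφ]
  exact isFace_sep_eq_zero fun x ↦ nonneg_of_mem_convexHull hφ

theorem HasSigns.filter_mem_convexHull {A S : Finset V} (hAS : A ⊆ S)
    (h : HasSigns ∅ A (S \ A)) : S.filter (· ∈ convexHull ℝ (A : Set V)) = A := by
  obtain ⟨φ, hφ, hA⟩ := h.exists_eq_sep_eq_zero hAS
  refine Finset.Subset.antisymm (fun x hx ↦ ?_) fun x hx ↦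
    Finset.mem_filter.mpr ⟨hAS hx, subset_convexHull ℝ _ hx⟩
  obtain ⟨hxS, hxA⟩ := Finset.mem_filter.mp hx
  rw [hA, convexHull_sep_eq_zero hφ] at hxA
  exact Finset.mem_coe.mp (hA ▸ ⟨hxS, hxA.2⟩)

theorem bijOn_convexHull_setOf_isFace {S : Finset V} {F : Set V}
    (hF : IsFace (convexHull ℝ (S : Set V)) F) :
    Set.BijOn (fun A : Finset V ↦ convexHull ℝ (A : Set V))
      ((Finset.Icc (S.filter (· ∈ F)) S).filter fun A ↦ HasSigns ∅ A (S \ A))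
      {Q | IsFace (convexHull ℝ (S : Set V)) Q ∧ F ⊆ Q} := by
  refine Set.InvOn.bijOn (f' := fun Q ↦ S.filter (· ∈ Q)) ⟨?_, ?_⟩ ?_ ?_
  · intro A hA
    obtain ⟨hA, hsigns⟩ := Finset.mem_filter.mp hA
    exact hsigns.filter_mem_convexHull (Finset.mem_Icc.mp hA).2
  · exact fun Q hQ ↦ hQ.1.eq_convexHull_filter.symm
  · intro A hA
    obtain ⟨hA, hsigns⟩ := Finset.mem_filter.mp hA
    obtain ⟨hFA, hAS⟩ := Finset.mem_Icc.mp hA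
    refine ⟨hsigns.isFace_convexHull hAS, ?_⟩
    rw [hF.eq_convexHull_filter]
    exact convexHull_mono (Finset.coe_subset.mpr hFA)
  · intro Q hQ
    refine Finset.mem_filter.mpr ⟨Finset.mem_Icc.mpr ⟨fun x hx ↦ ?_, Finset.filter_subset _ S⟩,
      hQ.1.hasSigns⟩
    rw [Finset.mem_filter] at hx ⊢
    exact ⟨hx.1, hQ.2 hx.2⟩

theorem IsPolytope.finsum_neg_one_pow_faceRank_eq_zero {P F : Set V} (hP : IsPolytope P)
    (hF : IsFace P F) (hne : F ≠ P) :
    ∑ᶠ Q ∈ {Q | IsFace P Q ∧ F ⊆ Q}, (-1 : ℤ) ^ faceRank Q = 0 := by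
  obtain ⟨S, rfl⟩ := hP
  have hFS : S.filter (· ∈ F) ⊂ S := by
    refine (Finset.filter_subset _ S).ssubset_of_ne fun h ↦ hne ?_
    rw [hF.eq_convexHull_filter, h]
  rw [← finsum_mem_eq_of_bijOn _ (bijOn_convexHull_setOf_isFace hF) fun A _ ↦
    congrArg ((-1 : ℤ) ^ ·) (faceRank_convexHull (A : Set V)).symm,
    finsum_mem_coe_finset, Finset.sum_filter]
  exact hF.hasSigns.sum_Icc_eq_zero hFS

end Faces

section ToricRecursion

theorem coeff_truncG (d : ℤ) (h : ℚ[X]) (k : ℕ) :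
    (truncG d h).coeff k = if k ≤ d.toNat / 2 then ((1 - X) * h).coeff k else 0 := by
  simp only [truncG, finsetSum_coeff, coeff_C_mul, coeff_X_pow, mul_ite, mul_one, mul_zero,
    Finset.sum_ite_eq, Finset.mem_range, Nat.lt_succ_iff]
  congr 1
  rw [sub_mul, coeff_sub, one_mul]
  cases k with
  | zero => simp
  | succ k => simp

variable {V : Type*} [AddCommGroup V] [Module ℝ V] {F G : Set V}

theorem relHAux_self (n : ℕ) (F : Set V) : relHAux n F F = 1 := by
  cases n <;> simp [relHAux]

theorem relG_self (F : Set V) : relG F F = 1 := by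
  ext k
  rw [relG, relH, relHAux_self, coeff_truncG, mul_one]
  cases k <;> simp [coeff_one]

theorem faceRank_pos_of_subset_of_ne (hFG : F ⊆ G) (hne : G ≠ F) : 0 < faceRank G := by
  have hG : G.Nonempty := Set.nonempty_iff_ne_empty.mpr fun h ↦
    hne (h.trans (Set.subset_empty_iff.mp (h ▸ hFG)).symm)
  rw [faceRank_of_nonempty hG]
  exact Nat.succ_pos _

theorem relHAux_eq_of_faceRank_le (hG : IsPolytope G) (hFG : F ⊆ G) {m n : ℕ}
    (hm : faceRank G ≤ m) (hn : faceRank G ≤ n) : relHAux m F G = relHAux n F G := by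
  induction m generalizing n G with
  | zero =>
    have hGF : G = F := by
      by_contra hne
      exact (faceRank_pos_of_subset_of_ne hFG hne).not_ge hm
    rw [hGF, relHAux_self, relHAux_self]
  | succ m ih =>
    by_cases hne : G = F
    · rw [hne, relHAux_self, relHAux_self]
    obtain ⟨n, rfl⟩ :=
      Nat.exists_eq_add_one.mpr ((faceRank_pos_of_subset_of_ne hFG hne).trans_le hn)
    rw [relHAux, relHAux, if_neg hne, if_neg hne]
    refine finsum_mem_congr rfl fun G' ⟨hG', hFG', hne'⟩ ↦ ?_
    have := hG'.faceRank_lt hG hne'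
    rw [ih (hG.isPolytope_of_isFace hG') hFG' (n := n) (by omega) (by omega)]

theorem relH_eq_finsum (hG : IsPolytope G) (hFG : F ⊆ G) (hne : G ≠ F) :
    relH F G = ∑ᶠ G' ∈ {G' | IsFace G G' ∧ F ⊆ G' ∧ G' ≠ G},
      relG F G' * (X - 1) ^ (pdim G - pdim G' - 1).toNat := by
  obtain ⟨n, hn⟩ := Nat.exists_eq_add_one.mpr (faceRank_pos_of_subset_of_ne hFG hne)
  rw [relH, ← faceRank, hn, relHAux, if_neg hne]
  refine finsum_mem_congr rfl fun G' ⟨hG', hFG', hne'⟩ ↦ ?_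
  have := hG'.faceRank_lt hG hne'
  rw [relG, relH, ← faceRank,
    relHAux_eq_of_faceRank_le (hG.isPolytope_of_isFace hG') hFG' (by omega) le_rfl]

end ToricRecursion

section FaceLattice

variable {V : Type*} [AddCommGroup V] [Module ℝ V] {P : Set V}

/-- The face lattice of `P`, ordered by inclusion. -/
abbrev FaceLattice (P : Set V) : Type _ :=
  {F : Set V // IsFace P F}

/-- The element `(F, G) ↦ g(G/F, t)` of the incidence algebra of the face lattice. -/
noncomputable def faceG (P : Set V) : IncidenceAlgebra ℚ[X] (FaceLattice P) where
  toFun F G := if F ≤ G then relG F.1 G.1 else 0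
  eq_zero_of_not_le' _ _ hFG := if_neg hFG

theorem faceG_apply_of_le {F G : FaceLattice P} (hFG : F ≤ G) : faceG P F G = relG F.1 G.1 :=
  if_pos hFG

theorem IsPolytope.isFace_of_le (hP : IsPolytope P) {F G : FaceLattice P} (hFG : F ≤ G) :
    IsFace G.1 F.1 :=
  F.2.of_subset_of_subset hP hFG G.2.subset

theorem IsPolytope.strictMono_faceRank (hP : IsPolytope P) :
    StrictMono fun F : FaceLattice P ↦ faceRank F.1 := fun _ G hFG ↦
  (hP.isFace_of_le hFG.le).faceRank_lt (hP.isPolytope_of_isFace G.2) (Subtype.coe_ne_coe.mpr hFG.ne)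

theorem IsPolytope.coeff_faceG_of_lt (hP : IsPolytope P) {F G : FaceLattice P} (hFG : F < G)
    (k : ℕ) :
    (faceG P F G).coeff k =
      if 2 * k < faceRank G.1 - faceRank F.1 then ((1 - X) * relH F.1 G.1).coeff k else 0 := by
  have hrank : faceRank F.1 < faceRank G.1 := hP.strictMono_faceRank hFG
  rw [faceG_apply_of_le hFG.le, relG, coeff_truncG, pdim_eq_faceRank_sub_one G.1,
    pdim_eq_faceRank_sub_one F.1]
  congr 1
  simp only [eq_iff_iff]
  omega

variable [LocallyFiniteOrder (FaceLattice P)]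

theorem IsPolytope.finsum_isFace_eq_sum_filter_Icc (hP : IsPolytope P) {M : Type*}
    [AddCommMonoid M] (F G : FaceLattice P) (p : Set V → Prop) [DecidablePred p] (f : Set V → M) :
    ∑ᶠ Q ∈ {Q | IsFace G.1 Q ∧ F.1 ⊆ Q ∧ p Q}, f Q = ∑ Q ∈ Finset.Icc F G with p Q.1, f Q.1 := by
  rw [← finsum_mem_coe_finset, ← finsum_mem_image Subtype.val_injective.injOn]
  congr! 3 with Q
  simp only [Finset.coe_filter, Finset.mem_Icc]
  constructor
  · rintro ⟨hQ, hFQ, hpQ⟩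
    exact ⟨⟨Q, G.2.trans hP hQ⟩, ⟨⟨hFQ, hQ.subset⟩, hpQ⟩, rfl⟩
  · rintro ⟨Q, ⟨⟨hFQ, hQG⟩, hpQ⟩, rfl⟩
    exact ⟨hP.isFace_of_le hQG, hFQ, hpQ⟩

theorem IsPolytope.satisfiesEulerRelation_faceRank (hP : IsPolytope P) :
    SatisfiesEulerRelation fun F : FaceLattice P ↦ faceRank F.1 := by
  intro F G hFG
  have euler := (hP.isPolytope_of_isFace G.2).finsum_neg_one_pow_faceRank_eq_zero
    (hP.isFace_of_le hFG.le) (Subtype.coe_ne_coe.mpr hFG.ne)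
  have to_Icc := hP.finsum_isFace_eq_sum_filter_Icc F G (fun _ ↦ True)
    fun Q ↦ (-1 : ℤ) ^ faceRank Q
  simp only [and_true, Finset.filter_true] at to_Icc
  exact to_Icc.symm.trans euler

theorem IsPolytope.relH_eq_sum_Ico (hP : IsPolytope P) {F G : FaceLattice P} (hFG : F < G) :
    relH F.1 G.1 = ∑ Q ∈ Finset.Ico F G,
      faceG P F Q * (X - 1) ^ (faceRank G.1 - faceRank Q.1 - 1) := by
  have filter_Icc : {Q ∈ Finset.Icc F G | Q.1 ≠ G.1} = Finset.Ico F G := by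
    ext Q
    simp [lt_iff_le_and_ne, and_assoc, Subtype.coe_inj]
  rw [relH_eq_finsum (hP.isPolytope_of_isFace G.2) hFG.le (Subtype.coe_ne_coe.mpr hFG.ne'),
    hP.finsum_isFace_eq_sum_filter_Icc F G (· ≠ G.1), filter_Icc]
  refine Finset.sum_congr rfl fun Q hQ ↦ ?_
  rw [faceG_apply_of_le (Finset.mem_Ico.mp hQ).1, pdim_eq_faceRank_sub_one G.1,
    pdim_eq_faceRank_sub_one Q.1]
  congr 2
  omega

theorem IsPolytope.faceG_mul_eulerianKernel_apply (hP : IsPolytope P) {F G : FaceLattice P}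
    (hFG : F < G) :
    (faceG P * eulerianKernel fun Q ↦ faceRank Q.1 : IncidenceAlgebra ℚ[X] (FaceLattice P)) F G =
      faceG P F G - (1 - X) * relH F.1 G.1 := by
  rw [mul_apply_eq_sum_Ico_add _ _ hFG.le, eulerianKernel_apply_self, mul_one, add_comm,
    sub_eq_add_neg, ← neg_mul, neg_sub, hP.relH_eq_sum_Ico hFG, Finset.mul_sum]
  congr 1
  refine Finset.sum_congr rfl fun Q hQ ↦ ?_
  have hQG := (Finset.mem_Ico.mp hQ).2
  have hrank : faceRank Q.1 < faceRank G.1 := hP.strictMono_faceRank hQG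
  rw [eulerianKernel_apply_of_le hQG.le, mul_left_comm, ← pow_succ',
    Nat.sub_add_cancel (Nat.sub_pos_of_lt hrank)]

theorem IsPolytope.isToricG_faceG (hP : IsPolytope P) :
    IsToricG (fun F : FaceLattice P ↦ faceRank F.1) (faceG P) where
  apply_self F := by rw [faceG_apply_of_le le_rfl, relG_self]
  coeff_eq_zero hFG hk := by rw [hP.coeff_faceG_of_lt hFG, if_neg hk.not_gt]
  coeff_mul_kernel_eq_zero hFG hk := by
    rw [hP.faceG_mul_eulerianKernel_apply hFG, coeff_sub, hP.coeff_faceG_of_lt hFG, if_pos hk,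
      sub_self]

end FaceLattice

theorem kalai_identity_general {V : Type*} [AddCommGroup V] [Module ℝ V] (P : Set V)
    (hP : IsPolytope P) (k : ℕ) :
    ((k : ℚ) + 1) * (toricG P).coeff (k + 1) + ((pdim P : ℚ) - k + 1) * (toricG P).coeff k =
      ∑ i ∈ Finset.range (k + 1), ((i : ℚ) + 1) *
        ∑ᶠ F ∈ {F : Set V | IsFace P F ∧ pdim F = (2 * i : ℤ)},
          (toricG F).coeff i * (relG F P).coeff (k - i) := by
  have : Finite (FaceLattice P) := hP.finite_setOf_isFace.to_subtype
  have : Fintype (FaceLattice P) := Fintype.ofFinite _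
  let _ : LocallyFiniteOrder (FaceLattice P) := Fintype.toLocallyFiniteOrder
  let bot : FaceLattice P := ⟨∅, Or.inr (Or.inl rfl)⟩
  let top : FaceLattice P := ⟨P, Or.inl rfl⟩
  have lattice_identity := hP.isToricG_faceG.kalai_identity hP.strictMono_faceRank.monotone
    hP.satisfiesEulerRelation_faceRank bot top k
  have coeff_eq : (pdim P : ℚ) - k + 1 = ((faceRank P - faceRank (∅ : Set V) : ℕ) : ℚ) - k := by
    rw [pdim_eq_faceRank_sub_one, faceRank_empty, Nat.sub_zero]
    push_cast
    ring
  rw [toricG, coeff_eq, ← faceG_apply_of_le (F := bot) (G := top) (Set.empty_subset P)]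
  refine lattice_identity.trans (Finset.sum_congr rfl fun i _ ↦ congrArg _ ?_)
  have to_Icc := hP.finsum_isFace_eq_sum_filter_Icc bot top (pdim · = (2 * i : ℤ))
    fun F ↦ (toricG F).coeff i * (relG F P).coeff (k - i)
  simp only [bot, top, Set.empty_subset, true_and] at to_Icc
  rw [to_Icc]
  refine Finset.sum_congr (Finset.filter_congr fun F _ ↦ ?_) fun F _ ↦ ?_
  · rw [pdim_eq_faceRank_sub_one, faceRank_empty]
    omega
  · rw [faceG_apply_of_le (Set.empty_subset F.1), faceG_apply_of_le F.2.subset, toricG]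

/-- Kalai's identity: for every `d`-polytope `P` and `0 ≤ k ≤ d/2 - 1`,
`(k+1)·g_{k+1}(P) + (d-k+1)·g_k(P)
   = ∑_{i=0}^{k} (i+1) ∑_{dim F = 2i} g_i(F)·g_{k-i}(P/F)`. -/
theorem kalai_identity {V : Type*} [AddCommGroup V] [Module ℝ V]
    (P : Set V) (hP : IsPolytope P) (d : ℕ) (hdim : pdim P = (d : ℤ))
    (k : ℕ) (hk : 2 * (k + 1) ≤ d) :
    ((k : ℚ) + 1) * (toricG P).coeff (k + 1) +
        ((d : ℚ) - (k : ℚ) + 1) * (toricG P).coeff k =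
      ∑ i ∈ Finset.range (k + 1), ((i : ℚ) + 1) *
        ∑ᶠ F ∈ {F : Set V | IsFace P F ∧ pdim F = (2 * i : ℤ)},
          (toricG F).coeff i * (relG F P).coeff (k - i) := by
  simpa only [hdim, Int.cast_natCast] using kalai_identity_general P hP k
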